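/- arXiv:1508.05892 — 2 statements merged into one kernel-verified Lean document; each statement's English description precedes it below -/
import Mathlib

section
/- There exists an unextendible set of 8 pairwise disjoint maximal commuting classes in U^{(9)}: eight pairwise disjoint maximal commuting classes C₁,…,C₈ of two-qutrit generalized Pauli operators such that no maximal commuting class is contained in U^{(9)} \ ({I} ∪ C₁ ∪ … ∪ C₈). -/
/-!
Write `v = (x, z)` for a point of the symplectic space `(ℤ/3)² × (ℤ/3)²`. The operator
`pauli v = (X^x.1 Z^z.1) ⊗ (X^x.2 Z^z.2)` has entries `χ(z ⬝ j)` at the places `(j + x, j)` and `0`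
elsewhere, `χ` being the standard additive character of `ℤ/3`. Hence `v ↦ pauli v` is injective,
and `pauli v * pauli w` is the phase `χ(v.z ⬝ w.x)` times `pauli (v + w)`, so that two operators
commute exactly when the symplectic form of their labels vanishes (`commute_pauli_iff`).

The claim thereby becomes one about the generalized quadrangle `W(3)` of totally isotropic lines of
`PG(3,3)`: some partial spread of 8 lines is maximal. The lines `line i` below form one. They leave
8 projective points uncovered, that is 16 nonzero vectors, and among these no three projective
points are pairwise orthogonal (`uncovered_clique`). A further maximal commuting class would consist
of 8 pairwise orthogonal uncovered vectors, hence span at least 4 such points, so none exists.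
-/


open Matrix
open scoped Kronecker

noncomputable section

/-- ω = exp(2πi/p), a primitive p-th root of unity. -/
def omega_p (p : ℕ) : ℂ := Complex.exp (2 * Real.pi * Complex.I / p)

/-- Generalized Pauli X on ℂ^p : X e_j = e_{j+1}. -/
def genX (p : ℕ) : Matrix (ZMod p) (ZMod p) ℂ :=
  Matrix.of fun i j => if i = j + 1 then 1 else 0

/-- Generalized Pauli Z on ℂ^p : Z e_j = ω^j e_j. -/
def genZ (p : ℕ) : Matrix (ZMod p) (ZMod p) ℂ :=
  Matrix.of fun i j => if i = j then omega_p p ^ j.val else 0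

/-- The space of p² × p² complex matrices. -/
abbrev PauliMat (p : ℕ) := Matrix (ZMod p × ZMod p) (ZMod p × ZMod p) ℂ

/-- The set U^{(p²)} of p⁴ two-particle generalized Pauli operators
    (X^m Z^n) ⊗ (X^k Z^l), with m,n,k,l ∈ {0,…,p−1}. -/
def PauliSet (p : ℕ) [NeZero p] : Set (PauliMat p) :=
  { U | ∃ m n k l : ZMod p,
      U = (genX p ^ m.val * genZ p ^ n.val) ⊗ₖ (genX p ^ k.val * genZ p ^ l.val) }

/-- A maximal commuting class: a subset of U^{(p²)} \ {I} of cardinality p² − 1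
    whose elements pairwise commute. -/
def MaxCommClass (p : ℕ) [NeZero p] (C : Set (PauliMat p)) : Prop :=
  C ⊆ PauliSet p \ {1} ∧ C.ncard = p ^ 2 - 1 ∧ ∀ U ∈ C, ∀ V ∈ C, Commute U V

/-- U ∘ V: the unique element of U^{(p²)} such that U·V is a power of ω times it. -/
def circ (p : ℕ) [NeZero p] (U V : PauliMat p) : PauliMat p :=
  @Classical.epsilon _ ⟨(0 : PauliMat p)⟩
    fun W => W ∈ PauliSet p ∧ ∃ j : ℕ, U * V = omega_p p ^ j • W

/-- U^{∘k}: the unique element of U^{(p²)} such that the matrix power U^k is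
    a power of ω times it. -/
def cpow (p : ℕ) [NeZero p] (U : PauliMat p) (k : ZMod p) : PauliMat p :=
  @Classical.epsilon _ ⟨(0 : PauliMat p)⟩
    fun W => W ∈ PauliSet p ∧ ∃ j : ℕ, U ^ k.val = omega_p p ^ j • W

/-- Independence: U^k is not a scalar multiple of V^l for any (k,l) ≠ (0,0). -/
def Indep (p : ℕ) [NeZero p] (U V : PauliMat p) : Prop :=
  ∀ k l : ZMod p, (k, l) ≠ (0, 0) → ∀ c : ℂ, U ^ k.val ≠ c • V ^ l.val

/-- The class ⟨U,V⟩ generated by a pair of independent commuting operators: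
    {U^{∘k} ∘ V^{∘l} : (k,l) ≠ (0,0)}. -/
def genClass (p : ℕ) [NeZero p] (U V : PauliMat p) : Set (PauliMat p) :=
  { W | ∃ k l : ZMod p, (k, l) ≠ (0, 0) ∧ W = circ p (cpow p U k) (cpow p V l) }

/-- A complete set of p² + 1 pairwise disjoint maximal commuting classes. -/
def CompleteSet (p : ℕ) [NeZero p] (S : Set (Set (PauliMat p))) : Prop :=
  S.ncard = p ^ 2 + 1 ∧ (∀ C ∈ S, MaxCommClass p C) ∧ S.Pairwise Disjoint

/-- A family of classes is unextendible if no maximal commuting class is contained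
    in U^{(p²)} \ ({I} ∪ ⋃ F). -/
def Unextendible (p : ℕ) [NeZero p] (F : Set (Set (PauliMat p))) : Prop :=
  ¬ ∃ C : Set (PauliMat p), MaxCommClass p C ∧ C ⊆ PauliSet p \ ({1} ∪ ⋃₀ F)

/-- Labels `(x, z)` of the two-qutrit operators: `x` holds the two exponents of `X`, and `z` the two
exponents of `Z`. -/
abbrev Label := (ZMod 3 × ZMod 3) × (ZMod 3 × ZMod 3)

/-- The product `v.z ⬝ w.x`, which is the exponent of the phase of `pauli v * pauli w`. -/
def phase (v w : Label) : ZMod 3 := v.2.1 * w.1.1 + v.2.2 * w.1.2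

/-- The two-qutrit generalized Pauli operator with a given label. -/
def pauli (v : Label) : PauliMat 3 :=
  (genX 3 ^ v.1.1.val * genZ 3 ^ v.2.1.val) ⊗ₖ (genX 3 ^ v.1.2.val * genZ 3 ^ v.2.2.val)

lemma omega_pow_val (j : ZMod 3) : omega_p 3 ^ j.val = ZMod.stdAddChar j := by
  rw [ZMod.stdAddChar_apply, ZMod.toCircle_apply, omega_p, ← Complex.exp_nat_mul]
  congr 1
  push_cast
  ring

lemma genX_pow_apply (m : ℕ) (i j : ZMod 3) :
    (genX 3 ^ m) i j = if i = j + m then 1 else 0 := by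
  induction m generalizing i j with
  | zero => simp [Matrix.one_apply]
  | succ m ih =>
    rw [pow_succ, Matrix.mul_apply]
    have hX (k : ZMod 3) : genX 3 k j = if k = j + 1 then 1 else 0 := rfl
    simp only [ih, hX, mul_ite, mul_one, mul_zero, Finset.sum_ite_eq', Finset.mem_univ, if_true]
    push_cast
    rw [add_assoc, add_comm (1 : ZMod 3)]

lemma genZ_eq_diagonal : genZ 3 = Matrix.diagonal fun j => ZMod.stdAddChar j := by
  ext i j
  by_cases h : i = j
  · simp [genZ, h, omega_pow_val]
  · simp [genZ, h]

lemma genX_pow_mul_genZ_pow_apply (m n i j : ZMod 3) :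
    (genX 3 ^ m.val * genZ 3 ^ n.val) i j = if i = j + m then ZMod.stdAddChar (n * j) else 0 := by
  have h : (ZMod.stdAddChar j : ℂ) ^ n.val = ZMod.stdAddChar (n * j) := by
    rw [← AddChar.map_nsmul_eq_pow, nsmul_eq_mul, ZMod.natCast_zmod_val]
  rw [genZ_eq_diagonal, Matrix.diagonal_pow, Matrix.mul_diagonal, genX_pow_apply,
    ZMod.natCast_zmod_val, Pi.pow_apply, h, ite_mul, one_mul, zero_mul]

lemma pauli_apply (v : Label) (i j : ZMod 3 × ZMod 3) :
    pauli v i j = if i = j + v.1 then ZMod.stdAddChar (phase v (j, 0)) else 0 := by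
  rw [pauli, Matrix.kroneckerMap_apply, genX_pow_mul_genZ_pow_apply, genX_pow_mul_genZ_pow_apply,
    phase, AddChar.map_add_eq_mul]
  simp only [Prod.ext_iff, Prod.fst_add, Prod.snd_add, ite_and, ite_mul, mul_ite, zero_mul, mul_zero]
  split_ifs <;> rfl

lemma pauli_zero : pauli 0 = 1 := by
  ext i j
  simp [pauli_apply, phase, Matrix.one_apply]

lemma stdAddChar_ne_zero (a : ZMod 3) : (ZMod.stdAddChar a : ℂ) ≠ 0 := by
  rw [← omega_pow_val]
  exact pow_ne_zero _ (Complex.exp_ne_zero _)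

lemma pauli_injective : Function.Injective pauli := by
  intro v w h
  -- The only nonzero entry in column `j` of `pauli v` is in row `j + v.1`.
  have key (j : ZMod 3 × ZMod 3) :
      j + v.1 = j + w.1 ∧ phase v (j, 0) = phase w (j, 0) := by
    have hj := congrFun (congrFun h (j + v.1)) j
    rw [pauli_apply, pauli_apply, if_pos rfl] at hj
    split_ifs at hj with h1
    · exact ⟨h1, ZMod.injective_stdAddChar hj⟩
    · exact absurd hj (stdAddChar_ne_zero _)
  have h0 := (key 0).1
  have h1 := (key (1, 0)).2
  have h2 := (key (0, 1)).2
  simp only [zero_add] at h0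
  simp only [phase, mul_one, mul_zero, add_zero, zero_add] at h1 h2
  exact Prod.ext h0 (Prod.ext h1 h2)

lemma pauli_mul (v w : Label) :
    pauli v * pauli w = (ZMod.stdAddChar (phase v w) : ℂ) • pauli (v + w) := by
  ext i j
  rw [Matrix.mul_apply, Matrix.smul_apply, pauli_apply (v + w)]
  simp only [pauli_apply w, mul_ite, mul_zero, Finset.sum_ite_eq', Finset.mem_univ, if_true]
  rw [pauli_apply, Prod.fst_add, add_assoc, add_comm w.1]
  split_ifs
  · rw [smul_eq_mul, ← AddChar.map_add_eq_mul, ← AddChar.map_add_eq_mul]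
    congr 1
    simp only [phase, Prod.fst_add, Prod.snd_add]
    ring
  · simp

lemma pauli_ne_zero (v : Label) : pauli v ≠ 0 := by
  intro h
  have h0 := congrFun (congrFun h (0 + v.1)) 0
  rw [pauli_apply, if_pos rfl] at h0
  exact stdAddChar_ne_zero _ h0

/-- Operators commute exactly when their labels are orthogonal for the symplectic form
`phase v w - phase w v`. -/
lemma commute_pauli_iff (v w : Label) :
    Commute (pauli v) (pauli w) ↔ phase v w = phase w v := by
  rw [Commute, SemiconjBy, pauli_mul, pauli_mul, add_comm w v]
  constructor
  · intro h
    exact ZMod.injective_stdAddChar (smul_left_injective ℂ (pauli_ne_zero (v + w)) h)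
  · intro h
    rw [h]

/-- The nonzero vectors of the span of two labels. -/
def spanPair (a b : Label) : Finset Label :=
  ((Finset.univ : Finset (ZMod 3 × ZMod 3)).image fun c =>
    ((c.1 * a.1.1 + c.2 * b.1.1, c.1 * a.1.2 + c.2 * b.1.2),
      (c.1 * a.2.1 + c.2 * b.2.1, c.1 * a.2.2 + c.2 * b.2.2))).erase 0

/-- Eight pairwise disjoint totally isotropic planes of `(ℤ/3)⁴` without their zero vector, which
form a maximal partial spread of `W(3)`. -/
def line : Fin 8 → Finset Label :=
  ![spanPair ((0, 0), (0, 1)) ((1, 0), (1, 0)),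
    spanPair ((0, 0), (1, 0)) ((0, 1), (0, 0)),
    spanPair ((0, 0), (1, 1)) ((1, 2), (0, 1)),
    spanPair ((0, 0), (1, 2)) ((1, 1), (0, 1)),
    spanPair ((0, 1), (0, 1)) ((1, 0), (2, 0)),
    spanPair ((0, 1), (1, 1)) ((1, 0), (2, 1)),
    spanPair ((0, 1), (2, 1)) ((1, 0), (0, 2)),
    spanPair ((0, 1), (2, 2)) ((1, 0), (2, 2))]

/-- The nonzero labels that lie on none of the eight lines. -/
def uncovered : Finset Label :=
  Finset.univ.filter fun v => v ≠ 0 ∧ ∀ i, v ∉ line i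

lemma zero_notMem_line : ∀ i, (0 : Label) ∉ line i := by decide +kernel

lemma card_line : ∀ i, (line i).card = 8 := by decide +kernel

lemma line_isotropic : ∀ i, ∀ v ∈ line i, ∀ w ∈ line i, phase v w = phase w v := by
  decide +kernel

lemma line_disjoint : ∀ i j, i ≠ j → Disjoint (line i) (line j) := by decide +kernel

/-- The uncovered labels orthogonal to two orthogonal, projectively distinct uncovered labels `v`
and `w` are `±v` and `±w` only. -/
lemma uncovered_clique : ∀ v ∈ uncovered, ∀ w ∈ uncovered, phase v w = phase w v →
    w ∉ ({v, -v} : Finset Label) →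
    (uncovered.filter fun u => phase v u = phase u v ∧ phase w u = phase u w).card ≤ 4 := by
  decide +kernel

lemma card_le_of_orthogonal (T : Finset Label) (hT : T ⊆ uncovered)
    (h : ∀ v ∈ T, ∀ w ∈ T, phase v w = phase w v) : T.card ≤ 4 := by
  rcases T.eq_empty_or_nonempty with rfl | ⟨v, hv⟩
  · simp
  by_cases hs : T ⊆ {v, -v}
  · have := Finset.card_le_card hs
    have := Finset.card_le_two (a := v) (b := -v)
    omega
  · obtain ⟨w, hw, hne⟩ := Finset.not_subset.mp hs
    refine le_trans (Finset.card_le_card fun u hu => ?_)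
      (uncovered_clique v (hT hv) w (hT hw) (h v hv w hw) hne)
    exact Finset.mem_filter.mpr ⟨hT hu, h v hv u hu, h w hw u hu⟩

/-- There exists an unextendible set of 8 pairwise disjoint maximal
commuting classes of two-qutrit generalized Pauli operators. -/
theorem stmt10 :
    ∃ C : Fin 8 → Set (PauliMat 3),
      (∀ i, MaxCommClass 3 (C i)) ∧
      (∀ i j, i ≠ j → Disjoint (C i) (C j)) ∧
      Unextendible 3 (Set.range C) := by
  refine ⟨fun i => pauli '' (line i : Set Label), fun i => ⟨?_, ?_, ?_⟩, fun i j hij => ?_, ?_⟩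
  · rintro _ ⟨v, hv, rfl⟩
    refine ⟨⟨v.1.1, v.2.1, v.1.2, v.2.2, rfl⟩, fun h1 => ?_⟩
    have hv0 : v = 0 := pauli_injective (h1.trans pauli_zero.symm)
    exact zero_notMem_line i (hv0 ▸ hv)
  · rw [Set.ncard_image_of_injective _ pauli_injective, Set.ncard_coe_finset, card_line]
    norm_num
  · rintro _ ⟨v, hv, rfl⟩ _ ⟨w, hw, rfl⟩
    exact (commute_pauli_iff v w).mpr (line_isotropic i v hv w hw)
  · rw [Set.disjoint_image_iff pauli_injective]
    exact Finset.disjoint_coe.mpr (line_disjoint i j hij)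
  · rintro ⟨C, ⟨-, hcard, hcomm⟩, hC⟩
    classical
    let T : Finset Label := Finset.univ.filter fun v => pauli v ∈ C
    have hTC : pauli '' (T : Set Label) = C := by
      ext U
      constructor
      · rintro ⟨v, hv, rfl⟩
        exact (Finset.mem_filter.mp hv).2
      · intro hU
        obtain ⟨m, n, k, l, rfl⟩ := (hC hU).1
        exact ⟨((m, k), (n, l)), Finset.mem_filter.mpr ⟨Finset.mem_univ _, hU⟩, rfl⟩
    have hT8 : T.card = 8 := by
      rw [← hTC, Set.ncard_image_of_injective _ pauli_injective, Set.ncard_coe_finset] at hcard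
      exact hcard
    have hT4 : T.card ≤ 4 := by
      refine card_le_of_orthogonal T (fun v hv => ?_) fun v hv w hw => ?_
      · have hvC := (hC (Finset.mem_filter.mp hv).2).2
        refine Finset.mem_filter.mpr ⟨Finset.mem_univ _, fun h0 => ?_, fun i hi => ?_⟩
        · exact hvC (Or.inl (by rw [h0, pauli_zero]; rfl))
        · exact hvC (Or.inr ⟨_, ⟨i, rfl⟩, v, hi, rfl⟩)
      · exact (commute_pauli_iff v w).mp
          (hcomm _ (Finset.mem_filter.mp hv).2 _ (Finset.mem_filter.mp hw).2)
    omega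
end
end

section
/- If (x₁,x₂) ≠ (y₁,y₂) are two distinct pairs in (Z/p)², then the associated vectors x and y in (Z/p)^{p+1} agree in exactly one of their p+1 coordinates (i.e., there is exactly one index k ∈ {1,…,p+1} with x_k = y_k). -/
/-!
The points `(m, m * a + b)`, `m ∈ ℤ/p`, form the line of slope `a` and intercept `b`, and the
first coordinate of the vector records the slope (the point at infinity). Two distinct lines
of this kind either are parallel, agreeing only in slope, or have different slopes and meet
at the single abscissa `m = (d - b) / (a - c)`. Since `k - 2` runs through the
representatives `0, …, p - 1` exactly once, this abscissa gives exactly one index `k`.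
-/

noncomputable section

/-- The vector x ∈ (Z/p)^{p+1} associated to (x₁,x₂):
    x_1 = x₁, x_2 = x₂, x_k = (k−2)x₁ + x₂ for k ≥ 3. -/
def vecx (p : ℕ) (a b : ZMod p) (k : ℕ) : ZMod p :=
  if k = 1 then a else if k = 2 then b else ((k - 2 : ℕ) : ZMod p) * a + b

/-- The coordinate `x_2 = b` also obeys the formula for `k ≥ 3`, as `0 * a + b`, so only the
first coordinate is exceptional. -/
theorem vecx_add_two (p : ℕ) (a b : ZMod p) (m : ℕ) : vecx p a b (m + 2) = (m : ZMod p) * a + b := by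
  rcases m with _ | m <;> simp [vecx]

/-- If (x₁,x₂) ≠ (y₁,y₂) in (Z/p)², the associated vectors agree in
exactly one of their p+1 coordinates. -/
theorem stmt16 (p : ℕ) (hp : p.Prime) (a b c d : ZMod p) (h : (a, b) ≠ (c, d)) :
    ((Finset.Icc 1 (p + 1)).filter fun k => vecx p a b k = vecx p c d k).card = 1 := by
  haveI : Fact p.Prime := ⟨hp⟩
  rw [Finset.card_eq_one]
  by_cases hac : a = c
  · subst hac
    have hbd : b ≠ d := fun e => h (by rw [e])
    refine ⟨1, ?_⟩
    ext k
    simp only [Finset.mem_filter, Finset.mem_Icc, Finset.mem_singleton]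
    constructor
    · rintro ⟨⟨h1, -⟩, he⟩
      by_contra hk
      obtain ⟨m, rfl⟩ : ∃ m, k = m + 2 := ⟨k - 2, by omega⟩
      rw [vecx_add_two, vecx_add_two] at he
      exact hbd (add_left_cancel he)
    · rintro rfl
      exact ⟨by omega, by simp [vecx]⟩
  · have hs : a - c ≠ 0 := sub_ne_zero.mpr hac
    -- Beyond the first coordinate, agreement at `m + 2` is the linear equation
    -- `m * (a - c) = d - b`, whose unique root in the field has one representative below `p`.
    refine ⟨((d - b) / (a - c)).val + 2, ?_⟩
    ext k
    simp only [Finset.mem_filter, Finset.mem_Icc, Finset.mem_singleton]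
    constructor
    · rintro ⟨⟨h1, h2⟩, he⟩
      have hk : k ≠ 1 := by
        rintro rfl
        exact hac (by simpa [vecx] using he)
      obtain ⟨m, rfl⟩ : ∃ m, k = m + 2 := ⟨k - 2, by omega⟩
      rw [vecx_add_two, vecx_add_two] at he
      have hm : (d - b) / (a - c) = (m : ZMod p) := by
        rw [div_eq_iff hs]
        linear_combination -he
      rw [hm, ZMod.val_cast_of_lt (by omega)]
    · rintro rfl
      have hlt := ZMod.val_lt ((d - b) / (a - c))
      refine ⟨by omega, ?_⟩
      rw [vecx_add_two, vecx_add_two, ZMod.natCast_zmod_val]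
      linear_combination div_mul_cancel₀ (d - b) hs
end
end
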